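/- Let u: (0,∞) → ℝ be defined implicitly by ∫_{u(y)}^{∞} ds / √(e^{2s} − 2s − 1) = y. Then u is well-defined (the integral converges for every real lower limit and the map is a strictly decreasing bijection onto (0,∞)), u is smooth, strictly positive, strictly decreasing, and satisfies the ODE −1 − u'' + e^{2u} = 0, with u' = −√(e^{2u} − 2u − 1). -/

import Mathlib

open Real MeasureTheory Set Filter

/-- The integral `F(a) = ∫_{a}^{∞} ds / √(e^{2s} − 2s − 1)`. -/
noncomputable def Fint (a : ℝ) : ℝ :=
  ∫ s in Set.Ioi a, 1 / Real.sqrt (Real.exp (2 * s) - 2 * s - 1)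

noncomputable def gg (s : ℝ) : ℝ := Real.exp (2 * s) - 2 * s - 1

noncomputable def ff (s : ℝ) : ℝ := 1 / Real.sqrt (Real.exp (2 * s) - 2 * s - 1)

lemma gg_pos {s : ℝ} (hs : 0 < s) : 0 < Real.exp (2 * s) - 2 * s - 1 := by
  have := Real.add_one_lt_exp (x := 2 * s) (by positivity)
  linarith

lemma ff_pos {s : ℝ} (hs : 0 < s) : 0 < ff s := by
  have := gg_pos hs
  unfold ff
  positivity

lemma ff_contAt {s : ℝ} (hs : 0 < s) : ContinuousAt ff s := by
  have h := gg_pos hs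
  unfold ff
  refine ContinuousAt.div continuousAt_const ?_ (Real.sqrt_pos.2 h).ne'
  fun_prop

lemma ff_contOn : ContinuousOn ff (Set.Ioi 0) :=
  fun _ hs => (ff_contAt hs).continuousWithinAt

lemma ff_le {s : ℝ} (hs : 1 ≤ s) : ff s ≤ 2 * Real.exp (-s) := by
  have h := gg_pos (s := s) (by linarith)
  have hq := Real.quadratic_le_exp_of_nonneg (x := 2 * s) (by linarith)
  have h2 : Real.exp s / 2 ≤ Real.sqrt (Real.exp (2 * s) - 2 * s - 1) := by
    apply Real.le_sqrt_of_sq_le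
    have : (Real.exp s / 2) ^ 2 = Real.exp (2 * s) / 4 := by
      rw [div_pow, ← Real.exp_nat_mul]; norm_num
    rw [this]
    nlinarith
  unfold ff
  rw [Real.exp_neg, div_le_iff₀ (Real.sqrt_pos.2 h)]
  have he := Real.exp_pos s
  calc (1:ℝ) = 2 * (Real.exp s)⁻¹ * (Real.exp s / 2) := by field_simp
    _ ≤ _ := by gcongr

lemma ff_ge {s : ℝ} (hs : 0 < s) (hs' : s ≤ 1 / 2) : 1 / 2 * s⁻¹ ≤ ff s := by
  have h := gg_pos hs
  have hq := Real.abs_exp_sub_one_sub_id_le (x := 2 * s) (by rw [abs_of_pos] <;> linarith)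
  have hq := (abs_le.1 hq).2
  have h2 : Real.sqrt (Real.exp (2 * s) - 2 * s - 1) ≤ 2 * s := by
    apply Real.sqrt_le_iff.2 ⟨by linarith, by linarith⟩
  unfold ff
  rw [le_div_iff₀ (Real.sqrt_pos.2 h)]
  calc 1 / 2 * s⁻¹ * _ ≤ 1 / 2 * s⁻¹ * (2 * s) := by gcongr
    _ = 1 := by field_simp

lemma ff_int {a : ℝ} (ha : 0 < a) : IntegrableOn ff (Set.Ioi a) := by
  refine integrable_of_isBigO_exp_neg (b := 1) one_pos
    (ff_contOn.mono (fun s hs => lt_of_lt_of_le ha hs)) ?_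
  refine Asymptotics.IsBigO.of_bound 2 ?_
  filter_upwards [eventually_ge_atTop 1] with s hs
  rw [Real.norm_of_nonneg (ff_pos (by linarith)).le, Real.norm_of_nonneg (Real.exp_pos _).le]
  simpa using ff_le hs

lemma ff_ii {a b : ℝ} (ha : 0 < a) (hb : 0 < b) : IntervalIntegrable ff volume a b := by
  apply ContinuousOn.intervalIntegrable
  exact ff_contOn.mono (fun s hs => lt_of_lt_of_le (lt_min ha hb) hs.1)

lemma Fint_eq {a b : ℝ} (ha : 0 < a) (hb : 0 < b) : Fint a = Fint b - ∫ s in b..a, ff s := by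
  have := intervalIntegral.integral_interval_add_Ioi (f := ff) (μ := volume)
    (ff_int hb) (ff_int ha)
  change _ = Fint b at this
  change _ + Fint a = Fint b at this
  linarith

lemma Fint_deriv {a : ℝ} (ha : 0 < a) : HasDerivAt Fint (-ff a) a := by
  have h : HasDerivAt (fun x => Fint 1 - ∫ s in (1:ℝ)..x, ff s) (-ff a) a := by
    refine HasDerivAt.const_sub _ ?_
    exact intervalIntegral.integral_hasDerivAt_right (ff_ii one_pos ha)
      (ff_contOn.stronglyMeasurableAtFilter isOpen_Ioi a ha) (ff_contAt ha)
  refine h.congr_of_eventuallyEq ?_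
  filter_upwards [Ioi_mem_nhds ha] with x hx using Fint_eq hx one_pos

lemma Fint_cont : ContinuousOn Fint (Set.Ioi 0) :=
  fun _ hs => (Fint_deriv hs).continuousAt.continuousWithinAt

lemma Fint_anti : StrictAntiOn Fint (Set.Ioi 0) := by
  refine strictAntiOn_of_deriv_neg (convex_Ioi 0) Fint_cont ?_
  intro x hx
  rw [interior_Ioi] at hx
  rw [(Fint_deriv hx).deriv]
  linarith [ff_pos hx]

lemma Fint_pos {a : ℝ} (ha : 0 < a) : 0 < Fint a := by
  have h1 : Fint (a + 1) < Fint a :=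
    Fint_anti ha (show (0:ℝ) < a + 1 by linarith) (by linarith)
  have h2 : 0 ≤ Fint (a + 1) := by
    unfold Fint
    exact integral_nonneg (fun s => by positivity)
  linarith

lemma Fint_le {a : ℝ} (ha : 1 ≤ a) : Fint a ≤ 2 * Real.exp (-a) := by
  have : Fint a ≤ ∫ s in Set.Ioi a, 2 * Real.exp (-s) := by
    refine setIntegral_mono_on (ff_int (by linarith))
      ((integrableOn_exp_neg_Ioi a).const_mul 2) measurableSet_Ioi ?_
    intro s hs
    exact ff_le (ha.trans (le_of_lt hs))
  rwa [integral_const_mul, integral_exp_neg_Ioi] at this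

lemma Fint_ge {a : ℝ} (ha : 0 < a) (ha' : a ≤ 1 / 2) :
    1 / 2 * Real.log (1 / 2 / a) ≤ Fint a := by
  have h := Fint_eq (a := 1 / 2) (b := a) (by norm_num) ha
  have hp := Fint_pos (a := 1 / 2) (by norm_num)
  have h3 : ∫ s in a..(1/2), 1 / 2 * s⁻¹ ≤ ∫ s in a..(1/2), ff s := by
    refine intervalIntegral.integral_mono_on ha' ?_ (ff_ii ha (by norm_num)) ?_
    · apply ContinuousOn.intervalIntegrable
      rw [uIcc_of_le ha']
      intro s hs
      have : s ≠ 0 := by linarith [hs.1]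
      exact (continuousAt_const.mul (continuousAt_inv₀ this)).continuousWithinAt
    · intro s hs
      exact ff_ge (by linarith [hs.1]) hs.2
  rw [intervalIntegral.integral_const_mul, integral_inv_of_pos ha (by norm_num)] at h3
  linarith

lemma Fint_surj : Set.SurjOn Fint (Set.Ioi 0) (Set.Ioi 0) := by
  intro y hy
  have hy : 0 < y := hy
  have h1 : ∃ a, 0 < a ∧ y ≤ Fint a := by
    refine ⟨1 / 2 * Real.exp (-(2 * y)), by positivity, ?_⟩
    have h := Fint_ge (a := 1 / 2 * Real.exp (-(2 * y))) (by positivity) (by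
      have : Real.exp (-(2 * y)) ≤ 1 := Real.exp_le_one_iff.2 (by linarith)
      linarith)
    have e : 1 / 2 / (1 / 2 * Real.exp (-(2 * y))) = Real.exp (2 * y) := by
      rw [Real.exp_neg]; field_simp
    rw [e, Real.log_exp] at h
    linarith
  have h2 : ∃ b, 0 < b ∧ Fint b ≤ y := by
    have ht : Tendsto (fun a : ℝ => 2 * Real.exp (-a)) atTop (nhds 0) := by
      simpa using (Real.tendsto_exp_neg_atTop_nhds_zero).const_mul 2
    obtain ⟨b, hb, hb1⟩ := ((ht.eventually_lt_const hy).and (eventually_ge_atTop 1)).exists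
    exact ⟨b, by linarith, (Fint_le hb1).trans hb.le⟩
  obtain ⟨a, ha, hya⟩ := h1
  obtain ⟨b, hb, hyb⟩ := h2
  exact isPreconnected_Ioi.intermediate_value (a := b) (b := a) hb ha Fint_cont ⟨hyb, hya⟩

lemma Fint_bij : Set.BijOn Fint (Set.Ioi 0) (Set.Ioi 0) :=
  ⟨fun _ ha => Fint_pos ha, Fint_anti.injOn, Fint_surj⟩

noncomputable def uu : ℝ → ℝ := Function.invFunOn Fint (Set.Ioi 0)

lemma uu_pos {y : ℝ} (hy : 0 < y) : 0 < uu y :=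
  Function.invFunOn_mem (Fint_surj hy)

lemma Fint_uu {y : ℝ} (hy : 0 < y) : Fint (uu y) = y :=
  Function.invFunOn_eq (Fint_surj hy)

lemma uu_Fint {a : ℝ} (ha : 0 < a) : uu (Fint a) = a :=
  Fint_anti.injOn (uu_pos (Fint_pos ha)) ha (Fint_uu (Fint_pos ha))

lemma uu_anti : StrictAntiOn uu (Set.Ioi 0) := by
  intro x hx y hy hxy
  rw [← Fint_uu hx, ← Fint_uu hy] at hxy
  exact (Fint_anti.lt_iff_gt (uu_pos hx) (uu_pos hy)).1 hxy

lemma uu_cont {y : ℝ} (hy : 0 < y) : ContinuousAt uu y := by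
  have h : ContinuousAt (fun y => - uu y) y := by
    refine StrictMonoOn.continuousAt_of_image_mem_nhds (s := Set.Ioi 0)
      (fun a ha b hb hab => neg_lt_neg (uu_anti ha hb hab)) (Ioi_mem_nhds hy) ?_
    refine mem_of_superset (Iio_mem_nhds (neg_lt_zero.2 (uu_pos hy))) ?_
    intro z hz
    have hz : z < 0 := hz
    refine ⟨Fint (-z), Fint_pos (by linarith), ?_⟩
    simp only
    rw [uu_Fint (by linarith), neg_neg]
  have h' := h.neg
  have e : (-fun y => -uu y) = uu := by ext z; simp
  rwa [e] at h'

lemma uu_deriv {y : ℝ} (hy : 0 < y) :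
    HasDerivAt uu (-Real.sqrt (Real.exp (2 * uu y) - 2 * uu y - 1)) y := by
  have h := HasDerivAt.of_local_left_inverse (uu_cont hy) (Fint_deriv (uu_pos hy))
    (neg_ne_zero.2 (ff_pos (uu_pos hy)).ne')
    (by filter_upwards [Ioi_mem_nhds hy] with x hx using Fint_uu hx)
  have e : (-ff (uu y))⁻¹ = -Real.sqrt (Real.exp (2 * uu y) - 2 * uu y - 1) := by
    unfold ff
    rw [inv_neg, one_div, inv_inv]
  rwa [e] at h

lemma uu_smooth_nat (n : ℕ) : ContDiffOn ℝ n uu (Set.Ioi 0) := by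
  induction n with
  | zero =>
    exact contDiffOn_zero.2 (fun y hy => (uu_cont hy).continuousWithinAt)
  | succ n ih =>
    push_cast
    rw [contDiffOn_succ_iff_deriv_of_isOpen isOpen_Ioi]
    refine ⟨fun y hy => (uu_deriv hy).differentiableAt.differentiableWithinAt, by simp, ?_⟩
    have h : ContDiffOn ℝ n (fun y => -Real.sqrt (Real.exp (2 * uu y) - 2 * uu y - 1))
        (Set.Ioi 0) := by
      refine (ContDiffOn.sqrt ?_ (fun y hy => (gg_pos (uu_pos hy)).ne')).neg
      exact (((contDiffOn_const.mul ih).exp).sub (contDiffOn_const.mul ih)).sub contDiffOn_const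
    exact h.congr (fun y hy => (uu_deriv hy).deriv)

lemma uu_deriv2 {y : ℝ} (hy : 0 < y) : deriv (deriv uu) y = Real.exp (2 * uu y) - 1 := by
  have he : deriv uu =ᶠ[nhds y]
      fun y => -Real.sqrt (Real.exp (2 * uu y) - 2 * uu y - 1) := by
    filter_upwards [Ioi_mem_nhds hy] with x hx using (uu_deriv hx).deriv
  rw [he.deriv_eq]
  have hp := gg_pos (uu_pos hy)
  have h2 := (uu_deriv hy).const_mul 2
  have h := (((h2.exp.sub h2).sub_const 1).sqrt hp.ne').neg
  have hs := (Real.sqrt_pos.2 hp).ne'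
  refine h.deriv.trans ?_
  simp only [Pi.sub_apply]
  field_simp
  ring

/-- the map `a ↦ ∫_a^∞ ds/√(e^{2s}−2s−1)` is well defined (the integrand is
integrable on `(a,∞)` for every lower limit `a > 0`) and is a strictly decreasing bijection
of `(0,∞)` onto `(0,∞)`; hence there is a (smooth, strictly positive, strictly decreasing)
function `u` on `(0,∞)` with `∫_{u(y)}^∞ ds/√(e^{2s}−2s−1) = y`, satisfying
`−1 − u'' + e^{2u} = 0` and `u' = −√(e^{2u} − 2u − 1)`. -/
theorem stmt_3 :
    (∀ a : ℝ, 0 < a →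
        IntegrableOn (fun s => 1 / Real.sqrt (Real.exp (2 * s) - 2 * s - 1)) (Set.Ioi a)) ∧
    StrictAntiOn Fint (Set.Ioi 0) ∧
    Set.BijOn Fint (Set.Ioi 0) (Set.Ioi 0) ∧
    ∃ u : ℝ → ℝ,
      (∀ y, 0 < y → Fint (u y) = y) ∧
      ContDiffOn ℝ (⊤ : ℕ∞) u (Set.Ioi 0) ∧
      (∀ y, 0 < y → 0 < u y) ∧
      StrictAntiOn u (Set.Ioi 0) ∧
      (∀ y, 0 < y →
        (-1 - deriv (deriv u) y + Real.exp (2 * u y) = 0) ∧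
        deriv u y = -Real.sqrt (Real.exp (2 * u y) - 2 * u y - 1)) := by
  refine ⟨fun a ha => ff_int ha, Fint_anti, Fint_bij, uu, fun y hy => Fint_uu hy,
    contDiffOn_infty.2 uu_smooth_nat, fun y hy => uu_pos hy, uu_anti, fun y hy => ⟨?_, ?_⟩⟩
  · rw [uu_deriv2 hy]; ring
  · exact (uu_deriv hy).deriv
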